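/- Let Ω be a program with weight constraints and let Π₁ be the set of rules l ← not not l, [C₁],…,[C_n] for every rule C₀ ← C₁,…,C_n of Ω and every positive rule element l of C₀. Then for any consistent sets Z and Z' of literals, Z' ⊨ Ω^Z if and only if Z' ⊨ Π₁^Z. -/

import Mathlib

open Classical

/-- A literal: a propositional atom `a` or its classical negation `¬ a`. -/
inductive Lit (α : Type) where
  | pos : α → Lit α
  | neg : α → Lit α

/-- The atom of a literal. -/
def Lit.atom {α : Type} : Lit α → α
  | .pos a => a
  | .neg a => a

/-- Mapping literals along a map of atoms. -/
def Lit.map {α β : Type} (f : α → β) : Lit α → Lit β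
  | .pos a => .pos (f a)
  | .neg a => .neg (f a)

/-- A set of literals is consistent if it contains no pair `a`, `¬ a`. -/
def LitConsistent {α : Type} (Z : Set (Lit α)) : Prop :=
  ∀ a : α, ¬(Lit.pos a ∈ Z ∧ Lit.neg a ∈ Z)

/-- Formulas (nested expressions): elementary formulas are literals, `⊥` and `⊤`;
formulas are built from them using negation as failure `naf`, conjunction `conj`
and disjunction `disj`. -/
inductive Formula (α : Type) where
  | lit : Lit α → Formula α
  | fbot : Formula α
  | ftop : Formula α
  | naf : Formula α → Formula α
  | conj : Formula α → Formula α → Formula α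
  | disj : Formula α → Formula α → Formula α

/-- Satisfaction of a formula by a set of literals. -/
def Formula.sat {α : Type} (Z : Set (Lit α)) : Formula α → Prop
  | .lit l => l ∈ Z
  | .fbot => False
  | .ftop => True
  | .naf F => ¬ F.sat Z
  | .conj F G => F.sat Z ∧ G.sat Z
  | .disj F G => F.sat Z ∨ G.sat Z

/-- A rule with nested expressions: `head ← body`. -/
structure NRule (α : Type) where
  head : Formula α
  body : Formula α

/-- `Z` satisfies a program (a set of rules). -/
def progSat {α : Type} (Z : Set (Lit α)) (P : Set (NRule α)) : Prop :=
  ∀ r ∈ P, r.body.sat Z → r.head.sat Z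

/-- The reduct `F^Z` of a formula relative to a set of literals `Z`. -/
noncomputable def Formula.reduct {α : Type} (Z : Set (Lit α)) : Formula α → Formula α
  | .lit l => .lit l
  | .fbot => .fbot
  | .ftop => .ftop
  | .naf F => if F.sat Z then .fbot else .ftop
  | .conj F G => .conj (F.reduct Z) (G.reduct Z)
  | .disj F G => .disj (F.reduct Z) (G.reduct Z)

/-- The reduct `Π^Z` of a program. -/
noncomputable def progReduct {α : Type} (Z : Set (Lit α)) (P : Set (NRule α)) : Set (NRule α) :=
  (fun r : NRule α => NRule.mk (r.head.reduct Z) (r.body.reduct Z)) '' P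

/-- `Z` is minimal (under inclusion) among the consistent sets of literals satisfying `P`. -/
def MinimalSat {α : Type} (Z : Set (Lit α)) (P : Set (NRule α)) : Prop :=
  LitConsistent Z ∧ progSat Z P ∧
    ∀ Z' : Set (Lit α), LitConsistent Z' → progSat Z' P → Z' ⊆ Z → Z' = Z

/-- `Z` is an answer set for a program `P` with nested expressions:
`Z` is minimal among the consistent sets satisfying the reduct `P^Z`. -/
def AnswerSet {α : Type} (Z : Set (Lit α)) (P : Set (NRule α)) : Prop :=
  MinimalSat Z (progReduct Z P)

/-- Strong equivalence of programs with nested expressions. -/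
def StrongEq {α : Type} (P₁ P₂ : Set (NRule α)) : Prop :=
  ∀ P : Set (NRule α), ∀ Z : Set (Lit α), AnswerSet Z (P₁ ∪ P) ↔ AnswerSet Z (P₂ ∪ P)

/-- Multiple conjunction (the empty conjunction is `⊤`). -/
def bigConj {α : Type} : List (Formula α) → Formula α
  | [] => .ftop
  | F :: Fs => .conj F (bigConj Fs)

/-- Multiple disjunction (the empty disjunction is `⊥`). -/
def bigDisj {α : Type} : List (Formula α) → Formula α
  | [] => .fbot
  | F :: Fs => .disj F (bigDisj Fs)

/-- `⟨F₁,…,F_n⟩:X`: the disjunction over `I ∈ X` of the conjunctions of the `Fᵢ`, `i ∈ I`. -/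
noncomputable def angled {α : Type} {n : ℕ} (F : Fin n → Formula α) (X : Finset (Finset (Fin n))) :
    Formula α :=
  bigDisj (X.toList.map fun I => bigConj (I.toList.map F))
/-- A rule element: a literal (positive rule element) or a literal
prefixed with negation as failure (negative rule element). -/
inductive RElem (α : Type) where
  | pos : Lit α → RElem α
  | neg : Lit α → RElem α

/-- Satisfaction of a rule element by a set of literals. -/
def RElem.sat {α : Type} (Z : Set (Lit α)) : RElem α → Prop
  | .pos l => l ∈ Z
  | .neg l => l ∉ Z

/-- Whether a rule element is negative. -/
def RElem.isNegB {α : Type} : RElem α → Bool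
  | .pos _ => false
  | .neg _ => true

/-- The sum of the weights of the entries of `S` that are satisfied by `Z`. -/
noncomputable def weightSum {α : Type} (Z : Set (Lit α)) (S : List (RElem α × ℝ)) : ℝ :=
  (S.map fun p => if p.1.sat Z then p.2 else 0).sum

/-- A weight constraint `L ≤ {c₁=w₁,…,c_m=w_m} ≤ U` with nonnegative weights;
`L` and `U` may be `−∞`/`+∞`. -/
structure WConstraint (α : Type) where
  L : EReal
  S : List (RElem α × ℝ)
  U : EReal
  nonneg : ∀ p ∈ S, (0 : ℝ) ≤ p.2

/-- `Z` satisfies the weight constraint `L ≤ S ≤ U`. -/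
def WConstraint.sat {α : Type} (Z : Set (Lit α)) (C : WConstraint α) : Prop :=
  C.L ≤ (weightSum Z C.S : EReal) ∧ (weightSum Z C.S : EReal) ≤ C.U

/-- A rule with weight constraints, `C₀ ← C₁,…,C_n`. -/
structure WRule (α : Type) where
  head : WConstraint α
  body : List (WConstraint α)

/-- `Z` satisfies a program with weight constraints. -/
def wProgSat {α : Type} (Z : Set (Lit α)) (Ω : Set (WRule α)) : Prop :=
  ∀ R ∈ Ω, (∀ C ∈ R.body, C.sat Z) → R.head.sat Z

/-- A weight constraint of the form `L ≤ S` (no upper bound), with nonnegative weights. -/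
structure LConstraint (α : Type) where
  L : EReal
  S : List (RElem α × ℝ)
  nonneg : ∀ p ∈ S, (0 : ℝ) ≤ p.2

/-- Satisfaction of a lower-bound constraint (by an arbitrary set of literals). -/
def LConstraint.sat {α : Type} (Z : Set (Lit α)) (C : LConstraint α) : Prop :=
  C.L ≤ (weightSum Z C.S : EReal)

/-- A Horn rule: a literal as head, lower-bound constraints as body. -/
structure HornRule (α : Type) where
  head : Lit α
  body : List (LConstraint α)

/-- Satisfaction of a set of Horn rules by an arbitrary set of literals. -/
def hornSat {α : Type} (Z : Set (Lit α)) (P : Set (HornRule α)) : Prop :=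
  ∀ r ∈ P, (∀ C ∈ r.body, C.sat Z) → r.head ∈ Z

/-- The deductive closure of a set of Horn rules: its unique minimal satisfying
set of literals (the intersection of all satisfying sets). -/
def cl {α : Type} (P : Set (HornRule α)) : Set (Lit α) :=
  ⋂₀ {Z : Set (Lit α) | hornSat Z P}

/-- The sum of the weights of the negative entries of `S` satisfied by `Z`. -/
noncomputable def negSatWeight {α : Type} (Z : Set (Lit α)) (S : List (RElem α × ℝ)) : ℝ :=
  (S.map fun p => if p.1.isNegB = true ∧ p.1.sat Z then p.2 else 0).sum

/-- The reduct `(L ≤ S)^Z` of a lower-bound constraint: drop the negative entries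
of `S` and decrease `L` by the total weight of the negative entries satisfied by `Z`. -/
noncomputable def LConstraint.reduct {α : Type} (Z : Set (Lit α)) (C : LConstraint α) :
    LConstraint α :=
  ⟨C.L - ((negSatWeight Z C.S : ℝ) : EReal),
   C.S.filter (fun p => !p.1.isNegB),
   fun p hp => C.nonneg p (List.mem_of_mem_filter hp)⟩

/-- The lower-bound part `L ≤ S` of a weight constraint `L ≤ S ≤ U`. -/
def WConstraint.lower {α : Type} (C : WConstraint α) : LConstraint α :=
  ⟨C.L, C.S, C.nonneg⟩

/-- The positive rule elements (as literals) occurring in `S`. -/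
def posElems {α : Type} (S : List (RElem α × ℝ)) : Set (Lit α) :=
  {l : Lit α | ∃ w : ℝ, (RElem.pos l, w) ∈ S}

/-- The reduct `Ω^Z` of a program with weight constraints: for each rule
`L₀≤S₀≤U₀ ← C₁,…,C_n` whose upper bounds are all satisfied by `Z`, the Horn rules
`l ← C₁^Z,…,C_n^Z` for all positive rule elements `l` of `S₀` with `l ∈ Z`. -/
noncomputable def wProgReduct {α : Type} (Z : Set (Lit α)) (Ω : Set (WRule α)) :
    Set (HornRule α) :=
  { r : HornRule α | ∃ R ∈ Ω,
      (∀ C ∈ R.body, (weightSum Z C.S : EReal) ≤ C.U) ∧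
      r.head ∈ posElems R.head.S ∧ r.head ∈ Z ∧
      r.body = R.body.map (fun C => C.lower.reduct Z) }

/-- `Z` is an answer set for the program `Ω` with weight constraints. -/
def WAnswerSet {α : Type} (Z : Set (Lit α)) (Ω : Set (WRule α)) : Prop :=
  LitConsistent Z ∧ wProgSat Z Ω ∧ cl (wProgReduct Z Ω) = Z

/-- Strong equivalence of programs with weight constraints. -/
def WStrongEq {α : Type} (Ω₁ Ω₂ : Set (WRule α)) : Prop :=
  ∀ Ω : Set (WRule α), ∀ Z : Set (Lit α), WAnswerSet Z (Ω₁ ∪ Ω) ↔ WAnswerSet Z (Ω₂ ∪ Ω)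

/-- A rule element as a formula: `l` becomes the literal `l`, `not l` becomes `naf l`. -/
def RElem.toFormula {α : Type} : RElem α → Formula α
  | .pos l => .lit l
  | .neg l => .naf (.lit l)

/-- The translation `[L ≤ S]`: the formula `⟨c₁,…,c_m⟩:{I : L ≤ Σ_{i∈I} wᵢ}`. -/
noncomputable def trLower {α : Type} (L : EReal) (S : List (RElem α × ℝ)) : Formula α :=
  angled (fun i : Fin S.length => (S.get i).1.toFormula)
    (Finset.univ.filter fun I : Finset (Fin S.length) =>
      L ≤ ((∑ i ∈ I, (S.get i).2 : ℝ) : EReal))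

/-- The translation `[S ≤ U]`: the formula `not ⟨c₁,…,c_m⟩:{I : U < Σ_{i∈I} wᵢ}`. -/
noncomputable def trUpper {α : Type} (S : List (RElem α × ℝ)) (U : EReal) : Formula α :=
  .naf (angled (fun i : Fin S.length => (S.get i).1.toFormula)
    (Finset.univ.filter fun I : Finset (Fin S.length) =>
      U < ((∑ i ∈ I, (S.get i).2 : ℝ) : EReal)))

/-- The translation `[L ≤ S ≤ U] = [L ≤ S],[S ≤ U]`. -/
noncomputable def trWC {α : Type} (C : WConstraint α) : Formula α :=
  .conj (trLower C.L C.S) (trUpper C.S C.U)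

/-- The formulas `l ; not l` for the positive rule elements `l` of `S`, in order. -/
def choiceFmls {α : Type} (S : List (RElem α × ℝ)) : List (Formula α) :=
  S.filterMap fun p =>
    match p.1 with
    | RElem.pos l => some (Formula.disj (.lit l) (.naf (.lit l)))
    | RElem.neg _ => none

/-- The translation of a rule with weight constraints `C₀ ← C₁,…,C_n`:
`(l₁; not l₁),…,(l_p; not l_p),[C₀] ← [C₁],…,[C_n]`. -/
noncomputable def trRule {α : Type} (R : WRule α) : NRule α :=
  ⟨bigConj (choiceFmls R.head.S ++ [trWC R.head]), bigConj (R.body.map trWC)⟩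

/-- The translation `[Ω]` of a program with weight constraints. -/
noncomputable def trProg {α : Type} (Ω : Set (WRule α)) : Set (NRule α) :=
  trRule '' Ω

/-- The nondisjunctive translation `[Ω]^{nd}`: each rule `C₀ ← C₁,…,C_n` is replaced
by the rules `l ← not not l, [C₁],…,[C_n]` for all positive rule elements `l` of `C₀`
together with `⊥ ← not [C₀], [C₁],…,[C_n]`. -/
noncomputable def ndTrans {α : Type} (Ω : Set (WRule α)) : Set (NRule α) :=
  { r : NRule α | ∃ R ∈ Ω,
      (∃ l ∈ posElems R.head.S,
        r = ⟨.lit l, bigConj (.naf (.naf (.lit l)) :: R.body.map trWC)⟩) ∨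
      r = ⟨.fbot, bigConj (.naf (trWC R.head) :: R.body.map trWC)⟩ }

/-- `Π₁`: the rules `l ← not not l, [C₁],…,[C_n]` for all rules `C₀ ← C₁,…,C_n` of `Ω`
and all positive rule elements `l` of `C₀`. -/
noncomputable def choicePart {α : Type} (Ω : Set (WRule α)) : Set (NRule α) :=
  { r : NRule α | ∃ R ∈ Ω, ∃ l ∈ posElems R.head.S,
      r = ⟨.lit l, bigConj (.naf (.naf (.lit l)) :: R.body.map trWC)⟩ }

theorem aux_conj {α : Type} (Z Z' : Set (Lit α)) (Fs : List (Formula α)) :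
    ((bigConj Fs).reduct Z).sat Z' ↔ ∀ F ∈ Fs, (F.reduct Z).sat Z' := by
  induction Fs with
  | nil => simp [bigConj, Formula.reduct, Formula.sat]
  | cons F Fs ih => simp [bigConj, Formula.reduct, Formula.sat, ih]

theorem aux_disj {α : Type} (Z Z' : Set (Lit α)) (Fs : List (Formula α)) :
    ((bigDisj Fs).reduct Z).sat Z' ↔ ∃ F ∈ Fs, (F.reduct Z).sat Z' := by
  induction Fs with
  | nil => simp [bigDisj, Formula.reduct, Formula.sat]
  | cons F Fs ih => simp [bigDisj, Formula.reduct, Formula.sat, ih]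

theorem aux_angled {α : Type} (Z Z' : Set (Lit α)) {n : ℕ} (F : Fin n → Formula α)
    (X : Finset (Finset (Fin n))) :
    ((angled F X).reduct Z).sat Z' ↔ ∃ I ∈ X, ∀ i ∈ I, ((F i).reduct Z).sat Z' := by
  simp [angled, aux_disj, aux_conj]

theorem aux_reduct_self {α : Type} (Z : Set (Lit α)) (F : Formula α) :
    (F.reduct Z).sat Z ↔ F.sat Z := by
  induction F with
  | lit l => simp [Formula.reduct]
  | fbot => simp [Formula.reduct]
  | ftop => simp [Formula.reduct]
  | naf F ih => by_cases h : F.sat Z <;> simp [Formula.reduct, Formula.sat, h]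
  | conj F G h1 h2 => simp [Formula.reduct, Formula.sat, h1, h2]
  | disj F G h1 h2 => simp [Formula.reduct, Formula.sat, h1, h2]

theorem aux_sum {α : Type} (S : List (RElem α × ℝ)) (hS : ∀ p ∈ S, (0 : ℝ) ≤ p.2)
    (q : RElem α → Prop) (P : EReal → Prop) (hP : ∀ a b : EReal, a ≤ b → P a → P b) :
    (∃ I : Finset (Fin S.length), P ((∑ i ∈ I, (S.get i).2 : ℝ) : EReal) ∧
      ∀ i ∈ I, q (S.get i).1) ↔
    P (((S.map fun p => if q p.1 then p.2 else 0).sum : ℝ) : EReal) := by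
  have e : (S.map fun p => if q p.1 then p.2 else 0).sum
      = ∑ i ∈ Finset.univ.filter (fun i : Fin S.length => q (S.get i).1), (S.get i).2 := by
    rw [Finset.sum_filter]
    exact (Fin.sum_univ_fun_getElem S (fun p => if q p.1 then p.2 else 0)).symm
  rw [e]
  constructor
  · rintro ⟨I, h1, h2⟩
    refine hP _ _ ?_ h1
    rw [EReal.coe_le_coe_iff]
    refine Finset.sum_le_sum_of_subset_of_nonneg ?_ ?_
    · intro i hi
      simpa using h2 i hi
    · intro i _ _
      exact hS _ (List.get_mem S i)
  · intro h
    exact ⟨_, h, fun i hi => (Finset.mem_filter.mp hi).2⟩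

theorem aux_weight {α : Type} (Z Z' : Set (Lit α)) (S : List (RElem α × ℝ)) :
    (S.map fun p => if (p.1.toFormula.reduct Z).sat Z' then p.2 else 0).sum
      = weightSum Z' (S.filter (fun p => !p.1.isNegB)) + negSatWeight Z S := by
  induction S with
  | nil => simp [weightSum, negSatWeight]
  | cons p S ih =>
    obtain ⟨c, w⟩ := p
    rw [List.map_cons, List.sum_cons, ih]
    cases c with
    | pos l =>
      by_cases h : l ∈ Z' <;>
      simp [weightSum, negSatWeight, RElem.toFormula, Formula.reduct, Formula.sat, RElem.isNegB,
        RElem.sat, h, add_assoc]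
    | neg l =>
      by_cases h : l ∈ Z <;>
      simp [weightSum, negSatWeight, RElem.toFormula, Formula.reduct, Formula.sat, RElem.isNegB,
        RElem.sat, h, add_left_comm]

theorem aux_lower {α : Type} (Z Z' : Set (Lit α)) (C : WConstraint α) :
    ((trLower C.L C.S).reduct Z).sat Z' ↔ (C.lower.reduct Z).sat Z' := by
  rw [trLower, aux_angled]
  have h := aux_sum C.S C.nonneg (fun c => (c.toFormula.reduct Z).sat Z') (fun x => C.L ≤ x)
    (fun a b hab ha => ha.trans hab)
  simp only [Finset.mem_filter, Finset.mem_univ, true_and]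
  rw [h, aux_weight]
  simp only [LConstraint.sat, LConstraint.reduct, WConstraint.lower]
  rw [EReal.sub_le_iff_le_add (by simp) (by simp), EReal.coe_add]

theorem aux_elem {α : Type} (Z : Set (Lit α)) (c : RElem α) :
    c.toFormula.sat Z ↔ c.sat Z := by
  cases c <;> simp [RElem.toFormula, Formula.sat, RElem.sat]

theorem aux_upper {α : Type} (Z Z' : Set (Lit α)) (C : WConstraint α) :
    ((trUpper C.S C.U).reduct Z).sat Z' ↔ (weightSum Z C.S : EReal) ≤ C.U := by
  have h := aux_sum C.S C.nonneg (fun c => c.sat Z) (fun x => C.U < x)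
    (fun a b hab ha => ha.trans_le hab)
  have h2 : (angled (fun i : Fin C.S.length => (C.S.get i).1.toFormula)
    (Finset.univ.filter fun I : Finset (Fin C.S.length) =>
      C.U < ((∑ i ∈ I, (C.S.get i).2 : ℝ) : EReal))).sat Z ↔ C.U < (weightSum Z C.S : EReal) := by
    rw [← aux_reduct_self, aux_angled]
    simp only [Finset.mem_filter, Finset.mem_univ, true_and, aux_reduct_self, aux_elem]
    exact h
  rw [trUpper, Formula.reduct, ← not_lt, ← h2]
  split_ifs with h3
  · exact ⟨fun h => h.elim, fun h => h h3⟩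
  · exact ⟨fun _ => h3, fun _ => trivial⟩

theorem aux_body {α : Type} (Z Z' : Set (Lit α)) (l : Lit α) (B : List (WConstraint α)) :
    ((bigConj (.naf (.naf (.lit l)) :: B.map trWC)).reduct Z).sat Z' ↔
      l ∈ Z ∧ (∀ C ∈ B, (weightSum Z C.S : EReal) ≤ C.U) ∧
        ∀ C ∈ B, (C.lower.reduct Z).sat Z' := by
  have hl : ((Formula.naf (.naf (.lit l))).reduct Z).sat Z' ↔ l ∈ Z := by
    by_cases h : l ∈ Z <;> simp [Formula.reduct, Formula.sat, h]
  have hC : ∀ C : WConstraint α, ((trWC C).reduct Z).sat Z' ↔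
      (C.lower.reduct Z).sat Z' ∧ (weightSum Z C.S : EReal) ≤ C.U := by
    intro C
    rw [← aux_lower, ← aux_upper Z Z']
    rfl
  rw [aux_conj]
  simp only [List.forall_mem_cons, hl, List.forall_mem_map, hC]
  constructor
  · rintro ⟨h1, h2⟩
    exact ⟨h1, fun C h => (h2 C h).2, fun C h => (h2 C h).1⟩
  · rintro ⟨h1, h2, h3⟩
    exact ⟨h1, fun C h => ⟨h3 C h, h2 C h⟩⟩

/-- For any consistent sets `Z`, `Z'` of literals, `Z' ⊨ Ω^Z` iff `Z' ⊨ Π₁^Z`. -/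
theorem sat_wReduct_iff_choicePart (Ω : Set (WRule ℕ)) (Z Z' : Set (Lit ℕ))
    (hZ : LitConsistent Z) (hZ' : LitConsistent Z') :
    hornSat Z' (wProgReduct Z Ω) ↔ progSat Z' (progReduct Z (choicePart Ω)) := by
  constructor
  · rintro h _ ⟨_, ⟨R, hR, l, hl, rfl⟩, rfl⟩ hb
    obtain ⟨h1, h2, h3⟩ := (aux_body Z Z' l R.body).1 hb
    refine h ⟨l, R.body.map (fun C => C.lower.reduct Z)⟩ ⟨R, hR, h2, hl, h1, rfl⟩ ?_
    simpa using h3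
  · rintro h ⟨l, B⟩ ⟨R, hR, h2, hl, h1, hB⟩ hb
    dsimp only at hB hl h1 hb
    subst hB
    refine h _ ⟨_, ⟨R, hR, l, hl, rfl⟩, rfl⟩ ?_
    refine (aux_body Z Z' l R.body).2 ⟨h1, h2, ?_⟩
    simpa using hb
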